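/- Let S be a skew lattice. Then S is normal, i.e. x∧y∧z∧w = x∧z∧y∧w for all x, y, z, w ∈ S, if and only if for every pair of comparable D-classes A > B (given by a₀, b₀ with b₀∧a₀∧b₀ = b₀) and all y, y' ∈ B, the cosets A∧y∧A and A∧y'∧A are equal; that is, B is the entire coset of A in B. -/

import Mathlib

/-!
In a normal band `c * y * d` depends only on `c`, `d` and the `D`-class of `y`, so the cosets of `A`
through `D`-related elements agree element by element. Conversely, a coset of the `D`-class of `e`
has at most one element in `eSe`. As `eyze` and `ezye` lie in `eSe` and are `D`-related, equality of
cosets forces `eyze = ezye`, from which normality follows.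
-/

/-- A band is a semigroup all of whose elements are idempotent. -/
class Band (S : Type*) extends Semigroup S where
  mul_self (x : S) : x * x = x

namespace Band

variable {S : Type*}

section Mul

variable [Mul S]

/-- Green's `J`-preorder in a band: `b` divides `a` on both sides (see `greenLE_iff`). It is encoded
by the equation `a * b * a = a`, so that `AntisymmRel GreenLE` is Green's relation `D`, which
coincides with `J` in a band. -/
def GreenLE (a b : S) : Prop :=
  a * b * a = a

/-- The equivalence class of `b` under Green's relation `D`. -/
def dClass (b : S) : Set S :=
  {x | AntisymmRel GreenLE x b}

/-- The coset `A ∧ b ∧ A` of `A` through `b`, with the same element of `A` on both sides. -/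
def coset (A : Set S) (b : S) : Set S :=
  {z | ∃ a ∈ A, z = a * b * a}

variable (S) in
/-- Normality of a band: adjacent inner factors of a product commute. -/
def IsNormal : Prop :=
  ∀ x y z w : S, x * y * z * w = x * z * y * w

end Mul

theorem eq_of_mem_coset_dClass [Semigroup S] {e b c : S} (hb : e * b * e = b) (hc : e * c * e = c)
    (h : c ∈ coset (dClass e) b) : c = b := by
  obtain ⟨a, ⟨-, (hea : e * a * e = e)⟩, hca⟩ := h
  calc
    c = e * (a * (e * b * e) * a) * e := by rw [hb, ← hca, hc]
    _ = (e * a * e) * b * (e * a * e) := by simp only [mul_assoc]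
    _ = b := by rw [hea, hb]

variable [Band S] {a b c e x y : S}

theorem mul_self_mul (a b : S) : a * (a * b) = a * b := by
  rw [← mul_assoc, mul_self]

theorem mul_mul_mul_cancel_middle (hx : x * b = x) (hy : b * y = y) :
    x * y * b * (x * y) = x * y := by
  have hxbx : x * b * x = x := by rw [hx, mul_self]
  have hyby : y * b * y = y := by rw [mul_assoc, hy, mul_self]
  calc
    x * y * b * (x * y) = (x * b * x) * y * b * (x * (y * b * y)) := by rw [hxbx, hyby]
    _ = x * ((b * x * y * b) * (b * x * y * b)) * y := by simp only [mul_assoc, mul_self_mul]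
    _ = x * (b * x * y * b) * y := by rw [mul_self]
    _ = (x * b * x) * (y * b * y) := by simp only [mul_assoc]
    _ = x * y := by rw [hxbx, hyby]

theorem greenLE_iff : GreenLE a b ↔ ∃ p q, a = p * b * q := by
  refine ⟨fun h ↦ ⟨a, a, h.symm⟩, ?_⟩
  rintro ⟨p, q, rfl⟩
  have split : p * b * q = (p * b) * (b * q) := by simp only [mul_assoc, mul_self_mul]
  rw [GreenLE, split]
  exact mul_mul_mul_cancel_middle (by rw [mul_assoc, mul_self]) (mul_self_mul b q)

theorem mul_greenLE_right (a b : S) : GreenLE (a * b) b :=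
  greenLE_iff.mpr ⟨a, b, by rw [mul_assoc, mul_self]⟩

theorem GreenLE.trans (hab : GreenLE a b) (hbc : GreenLE b c) : GreenLE a c :=
  greenLE_iff.mpr ⟨a * b, b * a, by
    calc
      a = a * (b * c * b) * a := by rw [hbc, hab]
      _ = a * b * c * (b * a) := by simp only [mul_assoc]⟩

instance : IsTrans S GreenLE :=
  ⟨fun _ _ _ ↦ GreenLE.trans⟩

theorem GreenLE.refl (a : S) : GreenLE a a := by
  rw [GreenLE, mul_self, mul_self]

instance : Std.Refl (GreenLE (S := S)) :=
  ⟨GreenLE.refl⟩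

theorem mem_coset_dClass_self (h : e * b * e = b) : b ∈ coset (dClass e) b :=
  ⟨e, AntisymmRel.refl GreenLE e, h.symm⟩

theorem GreenLE.mul (hb : GreenLE a b) (hc : GreenLE a c) : GreenLE a (b * c) := by
  have hcab : a * (c * a * b) * a = a := by
    calc
      a * (c * a * b) * a = (a * c * a) * b * a := by simp only [mul_assoc]
      _ = a := by rw [hc, hb]
  exact greenLE_iff.mpr ⟨a * c * a, a * b * a, by
    calc
      a = a * ((c * a * b) * (c * a * b)) * a := by rw [mul_self, hcab]
      _ = a * c * a * (b * c) * (a * b * a) := by simp only [mul_assoc]⟩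

theorem greenLE_conj_mul_comm (e y z : S) : GreenLE (e * y * z * e) (e * z * y * e) := by
  have he : GreenLE (e * y * z * e) e := mul_greenLE_right _ e
  have hy : GreenLE (e * y * z * e) y := greenLE_iff.mpr ⟨e, z * e, mul_assoc (e * y) z e⟩
  have hz : GreenLE (e * y * z * e) z := greenLE_iff.mpr ⟨e * y, e, rfl⟩
  exact ((he.mul hz).mul hy).mul he

theorem IsNormal.mul_mul_eq_of_greenLE (hS : IsNormal S) (hab : GreenLE a b) (c d : S) :
    c * a * d = c * a * b * d := by
  calc
    c * a * d = c * (a * b * a) * d := by rw [hab]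
    _ = c * a * b * a * d := by simp only [mul_assoc]
    _ = c * a * a * b * d := hS (c * a) b a d
    _ = c * a * b * d := by rw [mul_assoc c, mul_self]

theorem IsNormal.mul_mul_congr (hS : IsNormal S) (hab : AntisymmRel GreenLE a b) (c d : S) :
    c * a * d = c * b * d := by
  rw [hS.mul_mul_eq_of_greenLE hab.1, hS, ← hS.mul_mul_eq_of_greenLE hab.2]

theorem IsNormal.coset_congr (hS : IsNormal S) (A : Set S) (hab : AntisymmRel GreenLE a b) :
    coset A a = coset A b := by
  simp only [coset, hS.mul_mul_congr hab]

theorem isNormal_of_conj_mul_comm (h : ∀ e y z : S, e * y * z * e = e * z * y * e) :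
    IsNormal S := by
  have conj_mul (e y z : S) : e * y * e * z * e = e * y * z * e := by
    calc
      e * y * e * z * e = e * y * (e * z) * e := by rw [← mul_assoc]
      _ = e * (e * z) * y * e := h e y (e * z)
      _ = e * y * z * e := by rw [mul_self_mul, h]
  have swap_left (e y z w : S) : e * y * z * w * e = e * z * y * w * e := by
    calc
      e * y * z * w * e = (e * y * z * e) * w * e := by
        simpa only [mul_assoc] using (conj_mul e (y * z) w).symm
      _ = (e * z * y * e) * w * e := by rw [h]
      _ = e * z * y * w * e := by simpa only [mul_assoc] using conj_mul e (z * y) w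
  have swap_right (e w y z : S) : e * w * y * z * e = e * w * z * y * e := by
    calc
      e * w * y * z * e = e * w * (e * y * z * e) := by
        simpa only [mul_assoc] using (conj_mul e w (y * z)).symm
      _ = e * w * (e * z * y * e) := by rw [h]
      _ = e * w * z * y * e := by simpa only [mul_assoc] using conj_mul e w (z * y)
  intro x y z w
  calc
    x * y * z * w = (x * y * z * w) * (x * y * z * w) := (mul_self _).symm
    _ = (x * y * z * w * x) * (y * z * w) := by simp only [mul_assoc]
    _ = (x * z * y * w * x) * (y * z * w) := by rw [swap_left]
    _ = x * z * y * (w * x * y * z * w) := by simp only [mul_assoc]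
    _ = x * z * y * (w * x * z * y * w) := by rw [swap_right]
    _ = (x * z * y * w) * (x * z * y * w) := by simp only [mul_assoc]
    _ = x * z * y * w := mul_self _

end Band

open Band in
theorem normal_iff_single_coset_general {S : Type*} [Band S] :
    IsNormal S ↔ ∀ a₀ b₀ : S, GreenLE b₀ a₀ → ∀ y ∈ dClass b₀, ∀ y' ∈ dClass b₀,
      coset (dClass a₀) y = coset (dClass a₀) y' := by
  refine ⟨fun hS a₀ b₀ _ y hy y' hy' ↦ hS.coset_congr _ (hy.trans hy'.symm), fun h ↦ ?_⟩
  refine isNormal_of_conj_mul_comm fun e y z ↦ ?_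
  have conj_self (y z : S) : e * (e * y * z * e) * e = e * y * z * e := by
    simp only [mul_assoc, mul_self, mul_self_mul]
  have hle : GreenLE (e * z * y * e) e := mul_greenLE_right _ e
  have hD : e * y * z * e ∈ dClass (e * z * y * e) :=
    ⟨greenLE_conj_mul_comm e y z, greenLE_conj_mul_comm e z y⟩
  have hcoset := h e _ hle _ hD _ (AntisymmRel.refl GreenLE _)
  exact eq_of_mem_coset_dClass (conj_self z y) (conj_self y z)
    (hcoset ▸ mem_coset_dClass_self (conj_self y z))

/-- A skew lattice is normal iff each lower D-class is a single coset of any upper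
D-class. -/
theorem normal_iff_single_coset {S : Type*} (wedge vee : S → S → S)
    (wedge_idem : ∀ x : S, wedge x x = x)
    (vee_idem : ∀ x : S, vee x x = x)
    (wedge_assoc : ∀ x y z : S, wedge (wedge x y) z = wedge x (wedge y z))
    (vee_assoc : ∀ x y z : S, vee (vee x y) z = vee x (vee y z))
    (abs₁ : ∀ x y : S, wedge x (vee x y) = x)
    (abs₂ : ∀ x y : S, wedge (vee y x) x = x)
    (abs₃ : ∀ x y : S, vee x (wedge x y) = x)
    (abs₄ : ∀ x y : S, vee (wedge y x) x = x) :
    (∀ x y z w : S, wedge (wedge (wedge x y) z) w = wedge (wedge (wedge x z) y) w) ↔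
      (∀ a₀ b₀ : S, wedge (wedge b₀ a₀) b₀ = b₀ →
        ∀ y ∈ {x | wedge (wedge x b₀) x = x ∧ wedge (wedge b₀ x) b₀ = b₀},
          ∀ y' ∈ {x | wedge (wedge x b₀) x = x ∧ wedge (wedge b₀ x) b₀ = b₀},
            {z | ∃ a ∈ {x | wedge (wedge x a₀) x = x ∧ wedge (wedge a₀ x) a₀ = a₀},
                z = wedge (wedge a y) a} =
              {z | ∃ a ∈ {x | wedge (wedge x a₀) x = x ∧ wedge (wedge a₀ x) a₀ = a₀},
                z = wedge (wedge a y') a}) := by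
  let _ : Band S := { mul := wedge, mul_assoc := wedge_assoc, mul_self := wedge_idem }
  exact normal_iff_single_coset_general
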